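/- Let P_R ⊂ Σ, where Σ ⊂ ℝ^d is a compact hypersurface that is the graph of a C² function over [0,1]^{d−1} with bounded Hessian, with |P_R| ≥ c R^{2d/p}, and suppose (1/R^d)∫_{[0,R]^d}|∑_{ξ∈P_R} a_ξ e(ξ·x)|^p dx ≤ C‖a_ξ‖_{ℓ²}^p for all complex a_ξ with constants independent of R. Then p ≥ 2(d+1)/(d−1). -/

import Mathlib

open MeasureTheory Complex

noncomputable def e (z : ℝ) : ℂ := Complex.exp (2 * Real.pi * Complex.I * z)

def unitCube (m : ℕ) : Set (Fin m → ℝ) := Set.univ.pi fun _ => Set.Icc 0 1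

/-! Some cap of `P_R` of diameter `R^{-1/2}` contains at least `|P_R| (3 √R)^{-(d-1)}` points. The
phases of these points agree up to a small constant on a plank of dimensions `δ√R × ⋯ × δ√R × δR`,
so there the exponential sum over the cap has size comparable to the number `N` of its points.
Testing the inequality on the cap, whose coefficients are chosen so that the plank is moved inside
`[0, R]^d`, gives `N^p R^{(d+1)/2} ≲ R^d N^{p/2}`. Inserting `N ≳ R^{2d/p - (d-1)/2}` and letting
`R → ∞` compares the exponents of `R`. -/

section Preliminaries

open Filter Finset
open scoped NNReal

lemma unitCube_eq_Icc (m : ℕ) : unitCube m = Set.Icc 0 1 :=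
  Set.pi_univ_Icc 0 1

lemma le_of_frequently_mul_rpow_le {A B a b : ℝ} (hA : 0 < A)
    (h : ∃ᶠ R : ℝ in atTop, A * R ^ a ≤ B * R ^ b) : a ≤ b := by
  by_contra! hba
  have hlarge := (tendsto_rpow_atTop (sub_pos.2 hba)).eventually_gt_atTop (B / A)
  obtain ⟨R, hle, hgt, hR⟩ := (h.and_eventually (hlarge.and (eventually_gt_atTop 0))).exists
  rw [div_lt_iff₀ hA, Real.rpow_sub hR, div_mul_eq_mul_div, lt_div_iff₀ (by positivity)] at hgt
  linarith

lemma sqrt_pow_eq_rpow {R : ℝ} (hR : 0 ≤ R) (n : ℕ) : √R ^ n = R ^ ((n : ℝ) / 2) := by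
  rw [Real.sqrt_eq_rpow, ← Real.rpow_mul_natCast hR, one_div_mul_eq_div]

lemma rpow_half_mul_le {N V B p : ℝ} (hN : 0 < N) (h : (N / 2) ^ p * V ≤ B * √N ^ p) :
    N ^ (p / 2) * V ≤ 2 ^ p * B := by
  have hsqrt : √N ^ p = N ^ (p / 2) := by
    rw [Real.sqrt_eq_rpow, ← Real.rpow_mul hN.le, one_div_mul_eq_div]
  have hsplit : N ^ p = N ^ (p / 2) * N ^ (p / 2) := by rw [← Real.rpow_add hN, add_halves]
  rw [hsqrt, Real.div_rpow hN.le zero_le_two, hsplit, div_mul_eq_mul_div,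
    div_le_iff₀ (by positivity)] at h
  refine le_of_mul_le_mul_left ?_ (Real.rpow_pos_of_pos hN (p / 2))
  linarith

lemma rpow_half_le_of_le_sqrt_pow_mul {M N R p : ℝ} {n : ℕ} (hM : 0 ≤ M) (hN : 0 ≤ N) (hR : 0 ≤ R)
    (hp : 0 ≤ p) (h : M ≤ (3 * √R) ^ n * N) :
    M ^ (p / 2) ≤ 3 ^ (n * p / 2) * R ^ (n * p / 4) * N ^ (p / 2) := calc
  M ^ (p / 2) ≤ ((3 * √R) ^ n * N) ^ (p / 2) := by gcongr
  _ = 3 ^ (n * p / 2) * R ^ (n * p / 4) * N ^ (p / 2) := by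
    rw [mul_pow, sqrt_pow_eq_rpow hR, Real.mul_rpow (by positivity) hN,
      Real.mul_rpow (by positivity) (by positivity), ← Real.rpow_natCast 3,
      ← Real.rpow_mul (by positivity), ← Real.rpow_mul hR]
    ring_nf

lemma exists_card_le_card_mul_card_fiber {α β : Type*} [DecidableEq β] {s : Finset α}
    {t : Finset β} {f : α → β} (hf : Set.MapsTo f s t) (ht : t.Nonempty) :
    ∃ y ∈ t, #s ≤ #t * #{x ∈ s | f x = y} := by
  refine exists_le_of_sum_le ht ?_
  rw [sum_const, smul_eq_mul, ← mul_sum, ← card_eq_sum_card_fiberwise hf]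

lemma abs_dotProduct_le {ι : Type*} [Fintype ι] (v w : ι → ℝ) :
    |v ⬝ᵥ w| ≤ Fintype.card ι * (‖v‖ * ‖w‖) := by
  rw [← nsmul_eq_mul]
  refine (abs_sum_le_sum_abs _ _).trans (sum_le_card_nsmul _ _ _ fun i _ => ?_)
  rw [abs_mul]
  exact mul_le_mul (norm_le_pi_norm v i) (norm_le_pi_norm w i) (abs_nonneg _) (norm_nonneg _)

lemma exists_norm_le_forall_eq_dotProduct {ι : Type*} [Fintype ι] (L : (ι → ℝ) →L[ℝ] ℝ) :
    ∃ g : ι → ℝ, ‖g‖ ≤ ‖L‖ ∧ ∀ v, L v = g ⬝ᵥ v := by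
  classical
  refine ⟨fun i => L (Pi.single i 1), (pi_norm_le_iff_of_nonneg (norm_nonneg L)).2 fun i => ?_,
    fun v => ?_⟩
  · simpa [Pi.norm_single] using L.le_opNorm (Pi.single i 1)
  · conv_lhs => rw [pi_eq_sum_univ' v, map_sum]
    simp only [map_smul, smul_eq_mul, dotProduct, mul_comm]

lemma mul_measureReal_le_setIntegral {α : Type*} [MeasurableSpace α] {μ : Measure α}
    {s t : Set α} {f : α → ℝ} {b : ℝ} (hs : MeasurableSet s) (hst : s ⊆ t) (ht : μ t ≠ ⊤)
    (hf : IntegrableOn f t μ) (hf0 : 0 ≤ f) (hb : ∀ x ∈ s, b ≤ f x) :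
    b * μ.real s ≤ ∫ x in t, f x ∂μ :=
  (setIntegral_ge_of_const_le_real hs (measure_ne_top_of_subset hst ht) hb (hf.mono_set hst)).trans
    (setIntegral_mono_set hf (.of_forall hf0) hst.eventuallyLE)

lemma norm_sub_sub_le_of_lipschitzOnWith {E F : Type*} [NormedAddCommGroup E] [NormedSpace ℝ E]
    [NormedAddCommGroup F] [NormedSpace ℝ F] {f : E → F} {f' : E → E →L[ℝ] F} {s : Set E}
    {K : ℝ≥0} (hs : Convex ℝ s) (hf : ∀ x ∈ s, HasFDerivWithinAt f (f' x) s x)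
    (hf' : LipschitzOnWith K f' s) {a b : E} (ha : a ∈ s) (hb : b ∈ s) :
    ‖f b - f a - f' a (b - a)‖ ≤ K * ‖b - a‖ ^ 2 := by
  rw [pow_two, ← mul_assoc]
  refine Convex.norm_image_sub_le_of_norm_hasFDerivWithin_le'
    (s := s ∩ Metric.closedBall a ‖b - a‖)
    (fun x hx => (hf x hx.1).mono Set.inter_subset_left) (fun x hx => ?_)
    (hs.inter (convex_closedBall _ _)) ⟨ha, by simp⟩ ⟨hb, by simp [dist_eq_norm]⟩
  calc ‖f' x - f' a‖ ≤ K * ‖x - a‖ := hf'.norm_sub_le hx.1 ha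
    _ ≤ K * ‖b - a‖ := by gcongr; exact mem_closedBall_iff_norm.1 hx.2

lemma lipschitzWith_fderiv_of_norm_iteratedFDeriv_two_le {E F : Type*} [NormedAddCommGroup E]
    [NormedSpace ℝ E] [NormedAddCommGroup F] [NormedSpace ℝ F] {f : E → F} {H : ℝ}
    (hf : ContDiff ℝ 2 f) (hH : ∀ x, ‖iteratedFDeriv ℝ 2 f x‖ ≤ H) :
    LipschitzWith H.toNNReal (fderiv ℝ f) := by
  have hf' : ContDiff ℝ 1 (fderiv ℝ f) := hf.fderiv_right (by norm_num)
  refine lipschitzWith_of_nnnorm_fderiv_le (hf'.differentiable one_ne_zero) fun x => ?_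
  rw [← norm_toNNReal, ← norm_iteratedFDeriv_one, norm_iteratedFDeriv_fderiv]
  exact Real.toNNReal_le_toNNReal (hH x)

end Preliminaries

section ExponentialSums

open Finset
open scoped FourierTransform

lemma e_eq_fourierChar (z : ℝ) : e z = 𝐞 z := by
  rw [Real.fourierChar_apply, e]
  push_cast
  ring_nf

lemma e_add (x y : ℝ) : e (x + y) = e x * e y := by
  simp only [e_eq_fourierChar, AddChar.map_add_eq_mul, Circle.coe_mul]

lemma norm_e (x : ℝ) : ‖e x‖ = 1 := by
  rw [e_eq_fourierChar, Circle.norm_coe]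

lemma continuous_e : Continuous e := by
  unfold e
  fun_prop

lemma norm_e_sub_one_le (z : ℝ) : ‖e z - 1‖ ≤ 2 * Real.pi * |z| := by
  have h := Real.norm_exp_I_mul_ofReal_sub_one_le (x := 2 * Real.pi * z)
  rwa [mul_comm I, ← Real.fourierChar_apply, ← e_eq_fourierChar, Real.norm_eq_abs, abs_mul,
    abs_of_pos Real.two_pi_pos] at h

lemma norm_e_sub_e_le (x y : ℝ) : ‖e x - e y‖ ≤ 2 * Real.pi * |x - y| := by
  have h : e x - e y = (e (x - y) - 1) * e y := by
    rw [sub_mul, ← e_add, sub_add_cancel, one_mul]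
  rw [h, norm_mul, norm_e, mul_one]
  exact norm_e_sub_one_le _

lemma half_card_le_norm_sum_e {α : Type*} {Q : Finset α} {φ : α → ℝ} {z : ℝ}
    (h : ∀ i ∈ Q, |φ i - z| ≤ 1 / 16) : (#Q : ℝ) / 2 ≤ ‖∑ i ∈ Q, e (φ i)‖ := by
  have hdiff : ‖#Q * e z - ∑ i ∈ Q, e (φ i)‖ ≤ #Q * (1 / 2) := by
    rw [norm_sub_rev, ← nsmul_eq_mul, ← sum_const, ← sum_sub_distrib, ← nsmul_eq_mul]
    refine (norm_sum_le _ _).trans (sum_le_card_nsmul _ _ _ fun i hi => ?_)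
    calc ‖e (φ i) - e z‖ ≤ 2 * Real.pi * |φ i - z| := norm_e_sub_e_le _ _
      _ ≤ 2 * 4 * (1 / 16) := by gcongr; exacts [Real.pi_lt_four.le, h i hi]
      _ = 1 / 2 := by norm_num
  have hmain : ‖#Q * e z‖ = #Q := by rw [norm_mul, norm_e, norm_natCast, mul_one]
  linarith [norm_sub_norm_le (#Q * e z) (∑ i ∈ Q, e (φ i))]

variable {ι : Type*}

/-- The cube `[0, R]^d`, with the last coordinate split off. -/
def spaceCube (ι : Type*) (R : ℝ) : Set ((ι → ℝ) × ℝ) :=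
  (Set.univ.pi fun _ => Set.Icc 0 R) ×ˢ Set.Icc 0 R

lemma isCompact_spaceCube (R : ℝ) : IsCompact (spaceCube ι R) :=
  (isCompact_univ_pi fun _ => isCompact_Icc).prod isCompact_Icc

variable [Fintype ι]

/-- The phase `(η, f η) · x` of the point of the graph of `f` above `η`, where the last coordinate
of `x ∈ ℝ^d` is split off as `x.2`. -/
def graphPhase (f : (ι → ℝ) → ℝ) (η : ι → ℝ) (x : (ι → ℝ) × ℝ) : ℝ :=
  η ⬝ᵥ x.1 + f η * x.2

/-- The exponential sum with frequencies on the graph of `f` above `P`. -/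
noncomputable def expSum (f : (ι → ℝ) → ℝ) (P : Finset (ι → ℝ)) (a : (ι → ℝ) → ℂ)
    (x : (ι → ℝ) × ℝ) : ℂ :=
  ∑ η ∈ P, a η * e (graphPhase f η x)

/-- The discrete restriction inequality from `ℓ²` to `L^p([0, R]^d)`, the integral not being
normalized by the volume of the cube; `B` is the constant in the inequality for `p`-th powers. -/
def DiscreteRestriction (f : (ι → ℝ) → ℝ) (P : Finset (ι → ℝ)) (p R B : ℝ) : Prop :=
  ∀ a : (ι → ℝ) → ℂ,
    ∫ x in spaceCube ι R, ‖expSum f P a x‖ ^ p ≤ B * √(∑ η ∈ P, ‖a η‖ ^ 2) ^ p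

/-- The indicator of the cap `Q`, modulated so that its exponential sum focuses around the point
`(v, 0)` instead of the origin. -/
noncomputable def capCoeff (Q : Finset (ι → ℝ)) (v : ι → ℝ) : (ι → ℝ) → ℂ :=
  Set.indicator Q fun η => e (-(η ⬝ᵥ v))

lemma continuous_expSum (f : (ι → ℝ) → ℝ) (P : Finset (ι → ℝ)) (a : (ι → ℝ) → ℂ) :
    Continuous (expSum f P a) := by
  unfold expSum graphPhase dotProduct
  exact continuous_finsetSum _ fun η _ => continuous_const.mul (continuous_e.comp (by fun_prop))

lemma integrableOn_norm_expSum_rpow (f : (ι → ℝ) → ℝ) (P : Finset (ι → ℝ)) (a : (ι → ℝ) → ℂ)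
    {p : ℝ} (hp : 0 ≤ p) (R : ℝ) :
    IntegrableOn (fun x => ‖expSum f P a x‖ ^ p) (spaceCube ι R) :=
  ((continuous_expSum f P a).norm.rpow_const fun _ => Or.inr hp).continuousOn.integrableOn_compact
    (isCompact_spaceCube R)

variable {P Q : Finset (ι → ℝ)}

lemma sum_norm_capCoeff_sq (hQP : Q ⊆ P) (v : ι → ℝ) :
    ∑ η ∈ P, ‖capCoeff Q v η‖ ^ 2 = #Q := by
  rw [← sum_subset hQP fun η _ hη => by simp [capCoeff, hη], cast_card]
  refine sum_congr rfl fun η hη => ?_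
  rw [capCoeff, Set.indicator_of_mem (mem_coe.2 hη), norm_e, one_pow]

lemma expSum_capCoeff (f : (ι → ℝ) → ℝ) (hQP : Q ⊆ P) (v : ι → ℝ) (x : (ι → ℝ) × ℝ) :
    expSum f P (capCoeff Q v) x = ∑ η ∈ Q, e (graphPhase f η (x.1 - v, x.2)) := by
  rw [expSum, ← sum_subset hQP fun η _ hη => by simp [capCoeff, hη]]
  refine sum_congr rfl fun η hη => ?_
  rw [capCoeff, Set.indicator_of_mem (mem_coe.2 hη), ← e_add, graphPhase, graphPhase,
    dotProduct_sub]
  ring_nf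

lemma card_rpow_half_mul_volume_le {f : (ι → ℝ) → ℝ} {p R B : ℝ} (hp : 0 ≤ p)
    (hdr : DiscreteRestriction f P p R B) (hQP : Q ⊆ P) (hQ : Q.Nonempty)
    {S : Set ((ι → ℝ) × ℝ)} (hS : MeasurableSet S) (hSR : S ⊆ spaceCube ι R)
    {v : ι → ℝ} {z : (ι → ℝ) × ℝ → ℝ}
    (hphase : ∀ x ∈ S, ∀ η ∈ Q, |graphPhase f η (x.1 - v, x.2) - z x| ≤ 1 / 16) :
    (#Q : ℝ) ^ (p / 2) * volume.real S ≤ 2 ^ p * B := by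
  refine rpow_half_mul_le (by exact_mod_cast hQ.card_pos) ?_
  calc (#Q / 2 : ℝ) ^ p * volume.real S
      ≤ ∫ x in spaceCube ι R, ‖expSum f P (capCoeff Q v) x‖ ^ p := by
        refine mul_measureReal_le_setIntegral hS hSR (isCompact_spaceCube R).measure_ne_top
          (integrableOn_norm_expSum_rpow f P _ hp R) (fun x => by positivity) fun x hx => ?_
        rw [expSum_capCoeff f hQP]
        exact Real.rpow_le_rpow (by positivity) (half_card_le_norm_sum_e (hphase x hx)) hp
    _ ≤ B * √(#Q : ℝ) ^ p := by simpa only [sum_norm_capCoeff_sq hQP] using hdr (capCoeff Q v)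

end ExponentialSums

section DualBox

open Finset
open scoped NNReal

variable {ι : Type*} [Fintype ι]

/-- The plank dual to a cap on which a graph has slope `g`: the tube traced during the times
`[0, T]` by a sup-norm ball of radius `r` that starts at `v` and moves with velocity `-g`. -/
def dualBox (v g : ι → ℝ) (r T : ℝ) : Set ((ι → ℝ) × ℝ) :=
  {x | x.2 ∈ Set.Icc 0 T ∧ ‖x.1 - v + x.2 • g‖ ≤ r}

lemma measurableSet_dualBox (v g : ι → ℝ) (r T : ℝ) : MeasurableSet (dualBox v g r T) :=
  (measurableSet_Icc.preimage measurable_snd).inter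
    (measurableSet_le (f := fun x : (ι → ℝ) × ℝ => ‖x.1 - v + x.2 • g‖) (by fun_prop)
      measurable_const)

lemma volume_dualBox (v g : ι → ℝ) {r : ℝ} (hr : 0 ≤ r) (T : ℝ) :
    volume (dualBox v g r T) = ENNReal.ofReal ((2 * r) ^ Fintype.card ι) * ENNReal.ofReal T := by
  have hslice (t : ℝ) : volume ((fun x => (x, t)) ⁻¹' dualBox v g r T) =
      (Set.Icc 0 T).indicator (fun _ => ENNReal.ofReal ((2 * r) ^ Fintype.card ι)) t := by
    by_cases ht : t ∈ Set.Icc 0 T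
    · have hball : (fun x => (x, t)) ⁻¹' dualBox v g r T = Metric.closedBall (v - t • g) r := by
        ext x
        simp only [dualBox, Set.mem_preimage, Set.mem_ofPred_eq, ht, true_and,
          mem_closedBall_iff_norm, sub_sub_eq_add_sub, sub_add_eq_add_sub]
      rw [hball, Real.volume_pi_closedBall _ hr, Set.indicator_of_mem ht]
    · have hempty : (fun x => (x, t)) ⁻¹' dualBox v g r T = ∅ :=
        Set.eq_empty_of_forall_notMem fun x hx => ht hx.1
      rw [hempty, measure_empty, Set.indicator_of_notMem ht]
  rw [Measure.volume_eq_prod, Measure.prod_apply_symm (measurableSet_dualBox v g r T)]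
  simp only [hslice]
  rw [lintegral_indicator_const measurableSet_Icc, Real.volume_Icc, sub_zero]

lemma measureReal_dualBox (v g : ι → ℝ) {r T : ℝ} (hr : 0 ≤ r) (hT : 0 ≤ T) :
    volume.real (dualBox v g r T) = (2 * r) ^ Fintype.card ι * T := by
  rw [Measure.real, volume_dualBox v g hr, ENNReal.toReal_mul,
    ENNReal.toReal_ofReal (by positivity), ENNReal.toReal_ofReal hT]

lemma dualBox_subset_spaceCube {g : ι → ℝ} {r T R : ℝ} (hT : T ≤ R)
    (hrT : r + T * ‖g‖ ≤ R / 2) : dualBox (fun _ => R / 2) g r T ⊆ spaceCube ι R := by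
  rintro x ⟨⟨ht0, htT⟩, hx⟩
  refine ⟨fun i _ => ?_, ht0, htT.trans hT⟩
  have hdist : ‖x.1 - fun _ => R / 2‖ ≤ R / 2 := calc
    ‖x.1 - fun _ => R / 2‖ ≤ ‖(x.1 - fun _ => R / 2) + x.2 • g‖ + ‖x.2 • g‖ :=
      norm_le_add_norm_add _ _
    _ ≤ r + T * ‖g‖ := by rw [norm_smul, Real.norm_of_nonneg ht0]; gcongr
    _ ≤ R / 2 := hrT
  have hi := abs_le.1 ((norm_le_pi_norm _ i).trans hdist)
  rw [Pi.sub_apply] at hi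
  constructor <;> linarith

lemma graphPhase_sub_graphPhase (f : (ι → ℝ) → ℝ) (η η₀ g : ι → ℝ) (x : (ι → ℝ) × ℝ) :
    graphPhase f η x - graphPhase f η₀ x =
      (η - η₀) ⬝ᵥ (x.1 + x.2 • g) + x.2 * (f η - f η₀ - g ⬝ᵥ (η - η₀)) := by
  simp only [graphPhase, dotProduct_add, dotProduct_smul, smul_eq_mul, sub_dotProduct,
    dotProduct_comm g]
  ring

lemma abs_graphPhase_sub_le_of_mem_dualBox {f : (ι → ℝ) → ℝ} {η η₀ g v : ι → ℝ} {K : ℝ≥0}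
    {R δ : ℝ} (hR : 0 ≤ R) (hδ : 0 ≤ δ) (hη : ‖η - η₀‖ * √R ≤ 1)
    (hf : |f η - f η₀ - g ⬝ᵥ (η - η₀)| ≤ K * ‖η - η₀‖ ^ 2) {x : (ι → ℝ) × ℝ}
    (hx : x ∈ dualBox v g (δ * √R) (δ * R)) :
    |graphPhase f η (x.1 - v, x.2) - graphPhase f η₀ (x.1 - v, x.2)| ≤
      δ * (Fintype.card ι + K) := by
  obtain ⟨⟨ht0, htT⟩, hxr⟩ := hx
  have hlinear : |(η - η₀) ⬝ᵥ (x.1 - v + x.2 • g)| ≤ δ * Fintype.card ι := calc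
    _ ≤ Fintype.card ι * (‖η - η₀‖ * ‖x.1 - v + x.2 • g‖) := abs_dotProduct_le _ _
    _ ≤ Fintype.card ι * (‖η - η₀‖ * (δ * √R)) := by gcongr
    _ = δ * Fintype.card ι * (‖η - η₀‖ * √R) := by ring
    _ ≤ δ * Fintype.card ι := mul_le_of_le_one_right (by positivity) hη
  have hquadratic : |x.2 * (f η - f η₀ - g ⬝ᵥ (η - η₀))| ≤ δ * K := calc
    _ = x.2 * |f η - f η₀ - g ⬝ᵥ (η - η₀)| := by rw [abs_mul, abs_of_nonneg ht0]
    _ ≤ δ * R * (K * ‖η - η₀‖ ^ 2) := by gcongr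
    _ = δ * K * (‖η - η₀‖ * √R) ^ 2 := by rw [mul_pow, Real.sq_sqrt hR]; ring
    _ ≤ δ * K := mul_le_of_le_one_right (by positivity) (pow_le_one₀ (by positivity) hη)
  rw [graphPhase_sub_graphPhase f η η₀ g, mul_add]
  exact (abs_add_le _ _).trans (add_le_add hlinear hquadratic)

end DualBox

section Necessity

open Filter Finset
open scoped NNReal

variable {ι : Type*} [Fintype ι]

lemma exists_subset_card_le_mul_card {P : Finset (ι → ℝ)}
    (hP : (P : Set (ι → ℝ)) ⊆ Set.Icc 0 1) (n : ℕ) :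
    ∃ Q ⊆ P, #P ≤ (n + 1) ^ Fintype.card ι * #Q ∧
      ∀ a ∈ Q, ∀ b ∈ Q, ‖a - b‖ * n ≤ 1 := by
  classical
  let cell (η : ι → ℝ) (i : ι) : ℤ := ⌊η i * n⌋
  let cells : Finset (ι → ℤ) := Fintype.piFinset fun _ => Icc 0 (n : ℤ)
  have hmaps : Set.MapsTo cell P cells := by
    intro η hη
    refine Fintype.mem_piFinset.2 fun i => mem_Icc.2 ⟨?_, ?_⟩
    · exact Int.floor_nonneg.2 (mul_nonneg ((hP hη).1 i) n.cast_nonneg)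
    · exact Int.floor_le_iff.2
        ((mul_le_of_le_one_left n.cast_nonneg ((hP hη).2 i)).trans_lt (lt_add_one _))
  obtain ⟨y, -, hy⟩ := exists_card_le_card_mul_card_fiber hmaps ⟨0, by simp [cells]⟩
  refine ⟨{η ∈ P | cell η = y}, filter_subset _ _, by simpa [cells] using hy, ?_⟩
  intro a ha b hb
  have hcell := (mem_filter.1 ha).2.trans (mem_filter.1 hb).2.symm
  have hnorm : ‖(n : ℝ) • (a - b)‖ ≤ 1 := by
    refine (pi_norm_le_iff_of_nonneg zero_le_one).2 fun i => ?_
    have hi := Int.abs_sub_lt_one_of_floor_eq_floor (congrFun hcell i)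
    rw [← sub_mul, mul_comm] at hi
    exact hi.le
  rwa [norm_smul, Real.norm_natCast, mul_comm] at hnorm

lemma exists_cap_card_le {P : Finset (ι → ℝ)} (hP : (P : Set (ι → ℝ)) ⊆ Set.Icc 0 1) {R : ℝ}
    (hR : 1 ≤ R) (hne : P.Nonempty) :
    ∃ Q ⊆ P, Q.Nonempty ∧ (#P : ℝ) ≤ (3 * √R) ^ Fintype.card ι * #Q ∧
      ∀ a ∈ Q, ∀ b ∈ Q, ‖a - b‖ * √R ≤ 1 := by
  obtain ⟨Q, hQP, hcard, hdiam⟩ := exists_subset_card_le_mul_card hP ⌈√R⌉₊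
  have hceil : (⌈√R⌉₊ : ℝ) + 1 ≤ 3 * √R := by
    linarith [Nat.ceil_lt_add_one (Real.sqrt_nonneg R), Real.one_le_sqrt.2 hR]
  refine ⟨Q, hQP, ?_, ?_, fun a ha b hb => ?_⟩
  · exact card_pos.1 (pos_of_mul_pos_right (hne.card_pos.trans_le hcard) (Nat.zero_le _))
  · calc (#P : ℝ) ≤ (⌈√R⌉₊ + 1) ^ Fintype.card ι * #Q := by exact_mod_cast hcard
      _ ≤ (3 * √R) ^ Fintype.card ι * #Q := by gcongr
  · exact (mul_le_mul_of_nonneg_left (Nat.le_ceil _) (norm_nonneg _)).trans (hdiam a ha b hb)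

lemma card_cap_rpow_half_mul_le {f : (ι → ℝ) → ℝ} {P Q : Finset (ι → ℝ)} {η₀ g : ι → ℝ} {K : ℝ≥0}
    {p R B δ : ℝ} (hp : 0 ≤ p) (hR : 1 ≤ R) (hdr : DiscreteRestriction f P p R B) (hQP : Q ⊆ P)
    (hη₀ : η₀ ∈ Q) (hdiam : ∀ η ∈ Q, ‖η - η₀‖ * √R ≤ 1)
    (hf : ∀ η ∈ Q, |f η - f η₀ - g ⬝ᵥ (η - η₀)| ≤ K * ‖η - η₀‖ ^ 2)
    (hδ : 0 ≤ δ) (hδg : δ * (1 + ‖g‖) ≤ 1 / 2) (hδK : δ * (Fintype.card ι + K) ≤ 1 / 16) :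
    (#Q : ℝ) ^ (p / 2) * ((2 * δ) ^ Fintype.card ι * δ * R ^ ((Fintype.card ι : ℝ) / 2 + 1)) ≤
      2 ^ p * B := by
  have hR0 : 0 < R := by linarith
  have hδ1 : δ ≤ 1 := by nlinarith [norm_nonneg g]
  let v : ι → ℝ := fun _ => R / 2
  have hvol : volume.real (dualBox v g (δ * √R) (δ * R)) =
      (2 * δ) ^ Fintype.card ι * δ * R ^ ((Fintype.card ι : ℝ) / 2 + 1) := by
    rw [measureReal_dualBox _ _ (by positivity) (by positivity), ← mul_assoc 2, mul_pow _ (√R),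
      sqrt_pow_eq_rpow hR0.le, Real.rpow_add_one hR0.ne']
    ring
  rw [← hvol]
  refine card_rpow_half_mul_volume_le hp hdr hQP ⟨η₀, hη₀⟩ (measurableSet_dualBox _ _ _ _)
    (dualBox_subset_spaceCube ?_ ?_) (v := v) (z := fun x => graphPhase f η₀ (x.1 - v, x.2))
    fun x hx η hη => ?_
  · exact mul_le_of_le_one_left hR0.le hδ1
  · calc δ * √R + δ * R * ‖g‖ ≤ δ * R + δ * R * ‖g‖ := by
          gcongr; exact Real.sqrt_le_self_iff.2 (Or.inr hR)
      _ = δ * (1 + ‖g‖) * R := by ring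
      _ ≤ R / 2 := by nlinarith
  · exact (abs_graphPhase_sub_le_of_mem_dualBox hR0.le hδ (hdiam η hη) (hf η hη) hx).trans hδK

theorem exists_card_rpow_half_mul_le {f : (ι → ℝ) → ℝ} {f' : (ι → ℝ) → (ι → ℝ) →L[ℝ] ℝ}
    {K : ℝ≥0} {p : ℝ} (hp : 0 ≤ p)
    (hf : ∀ η ∈ Set.Icc 0 1, HasFDerivWithinAt f (f' η) (Set.Icc 0 1) η)
    (hf' : LipschitzOnWith K f' (Set.Icc 0 1)) :
    ∃ A : ℝ, ∀ (R B : ℝ) (P : Finset (ι → ℝ)), 1 ≤ R → (P : Set (ι → ℝ)) ⊆ Set.Icc 0 1 →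
      P.Nonempty → DiscreteRestriction f P p R B →
      (#P : ℝ) ^ (p / 2) * R ^ ((Fintype.card ι : ℝ) / 2 + 1) ≤
        A * B * R ^ (Fintype.card ι * p / 4) := by
  set n := Fintype.card ι
  obtain ⟨G, hG⟩ := isCompact_Icc.exists_bound_of_continuousOn hf'.continuousOn
  have hG0 : 0 ≤ G := (norm_nonneg _).trans (hG 0 ⟨le_rfl, zero_le_one⟩)
  obtain ⟨δ, hδ, hδeq⟩ : ∃ δ : ℝ, 0 < δ ∧ δ * (1 + n + K + G) = 1 / 16 :=
    ⟨1 / 16 / (1 + n + K + G), by positivity, div_mul_cancel₀ _ (by positivity)⟩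
  refine ⟨3 ^ (n * p / 2) * 2 ^ p / ((2 * δ) ^ n * δ), fun R B P hR hP hne hdr => ?_⟩
  obtain ⟨Q, hQP, ⟨η₀, hη₀⟩, hcard, hdiam⟩ := exists_cap_card_le hP hR hne
  have hmem (η) (hη : η ∈ Q) : η ∈ Set.Icc 0 1 := hP (hQP hη)
  obtain ⟨g, hgG, hg⟩ := exists_norm_le_forall_eq_dotProduct (f' η₀)
  have hcap := card_cap_rpow_half_mul_le hp hR hdr hQP hη₀ (fun η hη => hdiam η hη η₀ hη₀)
    (fun η hη => hg (η - η₀) ▸ norm_sub_sub_le_of_lipschitzOnWith (convex_Icc _ _) hf hf'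
      (hmem η₀ hη₀) (hmem η hη)) hδ.le
    (by nlinarith [hgG.trans (hG η₀ (hmem η₀ hη₀)), K.coe_nonneg, n.cast_nonneg (α := ℝ)])
    (by nlinarith)
  have hR0 : 0 ≤ R := by linarith
  have hpigeon := rpow_half_le_of_le_sqrt_pow_mul (by positivity) (by positivity) hR0 hp hcard
  rw [div_mul_eq_mul_div, div_mul_eq_mul_div, le_div_iff₀ (by positivity)]
  calc (#P : ℝ) ^ (p / 2) * R ^ ((n : ℝ) / 2 + 1) * ((2 * δ) ^ n * δ)
      ≤ 3 ^ (n * p / 2) * R ^ (n * p / 4) * (#Q : ℝ) ^ (p / 2) * R ^ ((n : ℝ) / 2 + 1) *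
          ((2 * δ) ^ n * δ) := by gcongr
    _ = 3 ^ (n * p / 2) * R ^ (n * p / 4) *
          ((#Q : ℝ) ^ (p / 2) * ((2 * δ) ^ n * δ * R ^ ((n : ℝ) / 2 + 1))) := by ring
    _ ≤ 3 ^ (n * p / 2) * R ^ (n * p / 4) * (2 ^ p * B) := by gcongr
    _ = 3 ^ (n * p / 2) * 2 ^ p * B * R ^ (n * p / 4) := by ring

theorem stmt19_general (d : ℕ) (hd : 2 ≤ d) (p c C : ℝ) (hp : 0 < p) (hc : 0 < c)
    (f : (Fin (d - 1) → ℝ) → ℝ) (f' : (Fin (d - 1) → ℝ) → (Fin (d - 1) → ℝ) →L[ℝ] ℝ)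
    (hf : ∀ η ∈ unitCube (d - 1), HasFDerivWithinAt f (f' η) (unitCube (d - 1)) η)
    (K : ℝ≥0) (hf' : LipschitzOnWith K f' (unitCube (d - 1)))
    (h : ∃ᶠ R : ℝ in atTop, ∃ P : Finset (Fin (d - 1) → ℝ),
      (∀ η ∈ P, η ∈ unitCube (d - 1)) ∧ c * R ^ (2 * (d : ℝ) / p) ≤ #P ∧
      ∀ a : (Fin (d - 1) → ℝ) → ℂ,
        (1 / R ^ (d : ℝ)) * ∫ x in spaceCube (Fin (d - 1)) R, ‖expSum f P a x‖ ^ p ≤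
          C * √(∑ η ∈ P, ‖a η‖ ^ 2) ^ p) :
    2 * ((d : ℝ) + 1) / ((d : ℝ) - 1) ≤ p := by
  have hd1 : (0 : ℝ) < d - 1 := sub_pos.2 (by exact_mod_cast hd)
  rw [unitCube_eq_Icc] at hf hf' h
  obtain ⟨A, hA⟩ := exists_card_rpow_half_mul_le hp.le hf hf'
  rw [Fintype.card_fin, Nat.cast_pred (by omega)] at hA
  have hexp : (d : ℝ) + ((d - 1) / 2 + 1) ≤ d + (d - 1) * p / 4 := by
    refine le_of_frequently_mul_rpow_le (A := c ^ (p / 2)) (B := A * C) (by positivity)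
      ((h.and_eventually (eventually_ge_atTop 1)).mono ?_)
    rintro R ⟨⟨P, hP, hcard, hdec⟩, hR⟩
    have hR0 : 0 < R := by linarith
    have hne : P.Nonempty := card_pos.1 <| Nat.cast_pos.1 <|
      (show 0 < c * R ^ (2 * (d : ℝ) / p) by positivity).trans_le hcard
    have hdr : DiscreteRestriction f P p R (C * R ^ (d : ℝ)) := fun a => by
      rw [mul_right_comm, ← div_le_iff₀ (by positivity), div_eq_inv_mul, ← one_div]
      exact hdec a
    have hlower : c ^ (p / 2) * R ^ (d : ℝ) ≤ (#P : ℝ) ^ (p / 2) := by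
      convert Real.rpow_le_rpow (by positivity) hcard (by positivity : 0 ≤ p / 2) using 1
      rw [Real.mul_rpow hc.le (by positivity), ← Real.rpow_mul hR0.le]
      field_simp
    calc c ^ (p / 2) * R ^ ((d : ℝ) + ((d - 1) / 2 + 1))
        = c ^ (p / 2) * R ^ (d : ℝ) * R ^ ((d - 1 : ℝ) / 2 + 1) := by
          rw [Real.rpow_add hR0, mul_assoc]
      _ ≤ (#P : ℝ) ^ (p / 2) * R ^ ((d - 1 : ℝ) / 2 + 1) := by gcongr
      _ ≤ A * (C * R ^ (d : ℝ)) * R ^ ((d - 1) * p / 4) := hA R _ P hR hP hne hdr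
      _ = A * C * R ^ (d + (d - 1) * p / 4) := by rw [Real.rpow_add hR0]; ring
  rw [div_le_iff₀ hd1]
  linarith

end Necessity

theorem stmt19 (d : ℕ) (hd : 2 ≤ d) (p c C R₀ H : ℝ) (hp : 2 ≤ p)
    (hc : 0 < c) (hC : 0 < C) (hR₀ : 1 ≤ R₀)
    (Pi : (Fin (d-1) → ℝ) → ℝ) (hPi : ContDiff ℝ 2 Pi)
    (hHess : ∀ η, ‖iteratedFDeriv ℝ 2 Pi η‖ ≤ H)
    (P : ℝ → Finset (Fin (d-1) → ℝ))
    (hPloc : ∀ R ≥ R₀, ∀ η ∈ P R, η ∈ unitCube (d-1))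
    (hPcard : ∀ R ≥ R₀, c * R ^ (2*(d:ℝ)/p) ≤ ((P R).card : ℝ))
    (hdec : ∀ R ≥ R₀, ∀ a : (Fin (d-1) → ℝ) → ℂ,
      (1 / R ^ (d:ℝ)) *
          ∫ x in (Set.univ.pi fun _ : Fin (d-1) => Set.Icc (0:ℝ) R) ×ˢ
              Set.Icc (0:ℝ) R,
            ‖∑ η ∈ P R, a η * e (∑ i, η i * x.1 i + Pi η * x.2)‖ ^ p
        ≤ C * Real.sqrt (∑ η ∈ P R, ‖a η‖ ^ 2) ^ p) :
    2 * ((d:ℝ) + 1) / ((d:ℝ) - 1) ≤ p :=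
  stmt19_general d hd p c C (by linarith) hc Pi (fderiv ℝ Pi)
    (fun η _ => (hPi.differentiable two_ne_zero η).hasFDerivAt.hasFDerivWithinAt) H.toNNReal
    (lipschitzWith_fderiv_of_norm_iteratedFDeriv_two_le hPi hHess).lipschitzOnWith
    ((Filter.eventually_ge_atTop R₀).frequently.mono fun R hR =>
      ⟨P R, hPloc R hR, hPcard R hR, hdec R hR⟩)
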